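/- For a route with inflow demand φ ≤ z̄ := min_l f̄_l and any consistent density vector x for φ, the route travel time satisfies τ(x) := Σ_l τ_l(x_l) ≥ τ^F := Σ_l L_l/v_l, with equality if and only if x is the free-flow vector x_l = φ/v_l for all l (in the case φ < z̄), or x has no strictly supercritical component (in the case φ = z̄). -/

import Mathlib

/-!
On a link whose density is below jam density, `v x ≤ w (x̄ - x)` holds exactly when `x ≤ xᶜ`;
hence the travel time is at least `L / v`, with equality exactly when the link is not strictly
supercritical (`Route.tauLink_ge`, `Route.tauLink_eq_iff`).

A consistent density vector has no jammed link (`Route.Consistent.lt_xbar`): a jammed link has zero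
supply, so the common flow is at most zero; its own demand is positive, so the flow can only be
blocked by the next link being jammed as well, and so on up to the last link, which has nothing
downstream to block it. Summing the link bounds gives `τ ≥ τ^F`, with equality iff no link is
strictly supercritical.

If moreover `φ < z̄` and no link is strictly supercritical, every supply equals its link's capacity,
which exceeds `φ`. So the common flow is `φ` and every link sends `φ = v x`, that is `x = φ / v`.
-/


/-!
Selfish routing on a single route with supply/demand (CTM) link mechanics.
A route consists of links `0, …, n-1` (paper indices `1, …, n`).
-/

open Finset

noncomputable section

namespace SelfishRouting

/-- A route with `n` links, each specified by jam density `xbar`, capacity `fbar`,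
free-flow speed `v` and length `L`, with the critical density `fbar l / v l`
strictly below the jam density. -/
structure Route (n : ℕ) where
  xbar : Fin n → ℝ
  fbar : Fin n → ℝ
  v : Fin n → ℝ
  L : Fin n → ℝ
  xbar_pos : ∀ l, 0 < xbar l
  fbar_pos : ∀ l, 0 < fbar l
  v_pos : ∀ l, 0 < v l
  L_pos : ∀ l, 0 < L l
  crit_lt_jam : ∀ l, fbar l / v l < xbar l

namespace Route

variable {n : ℕ} (r : Route n)

/-- critical density of link `l`. -/
def xc (l : Fin n) : ℝ := r.fbar l / r.v l

/-- congestion-wave speed of link `l`. -/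
def w (l : Fin n) : ℝ := r.fbar l / (r.xbar l - r.xc l)

/-- supply function of link `l`. -/
def supply (l : Fin n) (x : ℝ) : ℝ := min (r.fbar l) (r.w l * (r.xbar l - x))

/-- demand function of link `l`. -/
def demand (l : Fin n) (x : ℝ) : ℝ := min (r.v l * x) (r.fbar l)

/-- route capacity `z̄ = min_l f̄_l`. -/
def cap (hn : 0 < n) : ℝ :=
  (Finset.univ : Finset (Fin n)).inf' ⟨⟨0, hn⟩, Finset.mem_univ _⟩ r.fbar

/-- flow `f_0` entering the first link of the route, under inflow demand `φ`. -/
def inflow (hn : 0 < n) (φ : ℝ) (x : Fin n → ℝ) : ℝ :=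
  min φ (r.supply ⟨0, hn⟩ (x ⟨0, hn⟩))

/-- flow `f_{l+1}` leaving link `l`. -/
def outflow (x : Fin n → ℝ) (l : Fin n) : ℝ :=
  if h : (l : ℕ) + 1 < n then
    min (r.demand l (x l)) (r.supply ⟨(l : ℕ) + 1, h⟩ (x ⟨(l : ℕ) + 1, h⟩))
  else r.demand l (x l)

/-- `x` lies in the box `∏_l [0, x̄_l]`. -/
def InBox (x : Fin n → ℝ) : Prop := ∀ l, 0 ≤ x l ∧ x l ≤ r.xbar l

/-- `x` is a consistent density vector for inflow demand `φ`:
all link flows `f_0 = f_1 = ⋯ = f_n` coincide. -/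
def Consistent (hn : 0 < n) (φ : ℝ) (x : Fin n → ℝ) : Prop :=
  r.InBox x ∧ ∀ l, r.outflow x l = r.inflow hn φ x

/-- travel time of link `l` at density `x`. -/
def tauLink (l : Fin n) (x : ℝ) : ℝ :=
  if x = 0 then r.L l / r.v l
  else r.L l * x / min (r.v l * x) (r.w l * (r.xbar l - x))

/-- route travel time. -/
def tau (x : Fin n → ℝ) : ℝ := ∑ l, r.tauLink l (x l)

/-- free-flow route travel time. -/
def tauF : ℝ := ∑ l, r.L l / r.v l

/-- maximal route travel time `τ^S`, given the bottleneck link `b`. -/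
def tauS (hn : 0 < n) (b : Fin n) : ℝ :=
  ∑ l : Fin n, if (l : ℕ) < (b : ℕ) then r.tauLink l (r.xbar l - r.cap hn / r.w l)
       else r.L l / r.v l

end Route

end SelfishRouting

end

namespace SelfishRouting

namespace Route

variable {n : ℕ} (r : Route n)

lemma xbar_sub_xc_pos (l : Fin n) : 0 < r.xbar l - r.xc l :=
  sub_pos.2 (r.crit_lt_jam l)

lemma w_pos (l : Fin n) : 0 < r.w l :=
  div_pos (r.fbar_pos l) (r.xbar_sub_xc_pos l)

lemma v_mul_xc (l : Fin n) : r.v l * r.xc l = r.fbar l :=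
  mul_div_cancel₀ _ (r.v_pos l).ne'

lemma w_mul_xbar_sub_xc (l : Fin n) : r.w l * (r.xbar l - r.xc l) = r.fbar l :=
  div_mul_cancel₀ _ (r.xbar_sub_xc_pos l).ne'

lemma xc_pos (l : Fin n) : 0 < r.xc l := div_pos (r.fbar_pos l) (r.v_pos l)

/-- The two branches of the fundamental diagram cross at the critical density. -/
lemma v_mul_le_iff (l : Fin n) (x : ℝ) :
    r.v l * x ≤ r.w l * (r.xbar l - x) ↔ x ≤ r.xc l := by
  have h1 := r.v_mul_xc l
  have h2 := r.w_mul_xbar_sub_xc l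
  have hv := r.v_pos l
  have hw := r.w_pos l
  constructor
  · intro h
    by_contra! hc
    nlinarith
  · intro h
    nlinarith

lemma tauLink_of_le (l : Fin n) {x : ℝ} (h : x ≤ r.xc l) :
    r.tauLink l x = r.L l / r.v l := by
  unfold tauLink
  split_ifs with h0
  · rfl
  · rw [min_eq_left ((r.v_mul_le_iff l x).2 h), mul_div_mul_right _ _ h0]

/-- Strictly between critical and jam density the link is slower than in free flow. At jam density
the division by zero would make `tauLink` vanish, hence the hypothesis `hx`. -/
lemma tauLink_gt (l : Fin n) {x : ℝ} (hx : x < r.xbar l) (h : r.xc l < x) :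
    r.L l / r.v l < r.tauLink l x := by
  have hxpos := (r.xc_pos l).trans h
  have hlt : r.w l * (r.xbar l - x) < r.v l * x := by
    rw [← not_le, v_mul_le_iff, not_le]
    exact h
  rw [tauLink, if_neg hxpos.ne', min_eq_right hlt.le,
    div_lt_div_iff₀ (r.v_pos l) (mul_pos (r.w_pos l) (sub_pos.2 hx))]
  calc r.L l * (r.w l * (r.xbar l - x)) < r.L l * (r.v l * x) :=
        mul_lt_mul_of_pos_left hlt (r.L_pos l)
    _ = r.L l * x * r.v l := by ring

lemma tauLink_ge (l : Fin n) {x : ℝ} (hx : x < r.xbar l) :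
    r.L l / r.v l ≤ r.tauLink l x := by
  rcases le_or_gt x (r.xc l) with h | h
  · exact (r.tauLink_of_le l h).ge
  · exact (r.tauLink_gt l hx h).le

lemma tauLink_eq_iff (l : Fin n) {x : ℝ} (hx : x < r.xbar l) :
    r.L l / r.v l = r.tauLink l x ↔ ¬ r.xc l < x :=
  ⟨fun he h => (r.tauLink_gt l hx h).ne he, fun h => (r.tauLink_of_le l (not_lt.1 h)).symm⟩

lemma supply_of_le (l : Fin n) {x : ℝ} (h : x ≤ r.xc l) : r.supply l x = r.fbar l := by
  apply min_eq_left
  rw [← r.w_mul_xbar_sub_xc l]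
  exact mul_le_mul_of_nonneg_left (by linarith) (r.w_pos l).le

lemma demand_of_le (l : Fin n) {x : ℝ} (h : x ≤ r.xc l) : r.demand l x = r.v l * x := by
  apply min_eq_left
  rw [← r.v_mul_xc l]
  exact mul_le_mul_of_nonneg_left h (r.v_pos l).le

lemma cap_le (hn : 0 < n) (l : Fin n) : r.cap hn ≤ r.fbar l :=
  Finset.inf'_le _ (Finset.mem_univ l)

variable {r} {hn : 0 < n} {φ : ℝ} {x : Fin n → ℝ}

/-- The flow entering link `l` is the common flow, and is bounded by the supply of `l`. -/
lemma Consistent.inflow_le_supply (hx : r.Consistent hn φ x) (l : Fin n) :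
    r.inflow hn φ x ≤ r.supply l (x l) := by
  obtain ⟨k, hk⟩ := l
  cases k with
  | zero => exact min_le_right _ _
  | succ k =>
    rw [← hx.2 ⟨k, by omega⟩, outflow, dif_pos (by exact hk)]
    exact min_le_right _ _

/-- A jammed link forces the next link to exist and to be jammed. -/
lemma Consistent.jam_succ (hx : r.Consistent hn φ x) (l : Fin n) (hl : r.xbar l ≤ x l) :
    ∃ h : (l : ℕ) + 1 < n, r.xbar ⟨(l : ℕ) + 1, h⟩ ≤ x ⟨(l : ℕ) + 1, h⟩ := by
  have hz : r.outflow x l ≤ 0 := by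
    rw [hx.2 l]
    refine (hx.inflow_le_supply l).trans ((min_le_right _ _).trans ?_)
    exact mul_nonpos_of_nonneg_of_nonpos (r.w_pos l).le (by linarith)
  have hd : 0 < r.demand l (x l) :=
    lt_min (mul_pos (r.v_pos l) ((r.xbar_pos l).trans_le hl)) (r.fbar_pos l)
  unfold outflow at hz
  split_ifs at hz with h
  · refine ⟨h, ?_⟩
    by_contra! hc
    have hs : 0 < r.supply ⟨(l : ℕ) + 1, h⟩ (x ⟨(l : ℕ) + 1, h⟩) :=
      lt_min (r.fbar_pos _) (mul_pos (r.w_pos _) (sub_pos.2 hc))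
    exact absurd (lt_min hd hs) (not_lt.2 hz)
  · exact absurd hd (not_lt.2 hz)

lemma Consistent.lt_xbar (hx : r.Consistent hn φ x) (l : Fin n) : x l < r.xbar l := by
  by_contra! hl
  have key : ∀ k : ℕ, ∃ h : (l : ℕ) + k < n, r.xbar ⟨(l : ℕ) + k, h⟩ ≤ x ⟨(l : ℕ) + k, h⟩ := by
    intro k
    induction k with
    | zero => exact ⟨l.2, hl⟩
    | succ k ih =>
      obtain ⟨h, hk⟩ := ih
      exact hx.jam_succ ⟨(l : ℕ) + k, h⟩ hk
  obtain ⟨h, -⟩ := key n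
  omega

lemma Consistent.tau_eq_iff (hx : r.Consistent hn φ x) :
    r.tau x = r.tauF ↔ ∀ l, ¬ r.xc l < x l := by
  rw [eq_comm, tauF, tau, Finset.sum_eq_sum_iff_of_le fun l _ => r.tauLink_ge l (hx.lt_xbar l)]
  simp only [Finset.mem_univ, forall_true_left]
  exact forall_congr' fun l => r.tauLink_eq_iff l (hx.lt_xbar l)

/-- Below capacity, a consistent vector without strictly supercritical link carries the flow `φ` at
free-flow speed. -/
lemma Consistent.eq_freeFlow (hx : r.Consistent hn φ x) (hφ : φ < r.cap hn)
    (h : ∀ l, x l ≤ r.xc l) : x = fun l => φ / r.v l := by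
  have hs : ∀ l, φ < r.supply l (x l) := fun l => by
    rw [r.supply_of_le l (h l)]
    exact hφ.trans_le (r.cap_le hn l)
  have hz : r.inflow hn φ x = φ := min_eq_left (hs _).le
  funext l
  have ho : r.outflow x l = φ := (hx.2 l).trans hz
  have hd : r.demand l (x l) = φ := by
    unfold outflow at ho
    split_ifs at ho with hl
    · rcases min_choice (r.demand l (x l)) (r.supply ⟨(l : ℕ) + 1, hl⟩ (x ⟨(l : ℕ) + 1, hl⟩))
        with hm | hm
      · exact hm ▸ ho
      · exact absurd (hm.symm.trans ho) (hs _).ne'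
    · exact ho
  rw [r.demand_of_le l (h l)] at hd
  rw [eq_div_iff (r.v_pos l).ne', mul_comm, hd]

end Route

/-- For a route with inflow demand `φ ≤ z̄` and any consistent
density vector `x`, the route travel time is at least the free-flow travel time
`τ^F`, with equality iff `x` is the free-flow vector (when `φ < z̄`), respectively
iff `x` has no strictly supercritical component (when `φ = z̄`). -/
theorem routeTau_ge_tauF {n : ℕ} (hn : 0 < n) (r : Route n) (b : Fin n)
    (hb : ∀ l, l ≠ b → r.fbar b < r.fbar l)
    (φ : ℝ) (hφ0 : 0 ≤ φ) (hφ : φ ≤ r.cap hn)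
    (x : Fin n → ℝ) (hx : r.Consistent hn φ x) :
    r.tauF ≤ r.tau x ∧
    (φ < r.cap hn → (r.tau x = r.tauF ↔ x = fun l => φ / r.v l)) ∧
    (φ = r.cap hn → (r.tau x = r.tauF ↔ ∀ l, ¬ r.xc l < x l)) := by
  refine ⟨Finset.sum_le_sum fun l _ => r.tauLink_ge l (hx.lt_xbar l), fun hlt => ?_,
    fun _ => hx.tau_eq_iff⟩
  rw [hx.tau_eq_iff]
  refine ⟨fun h => hx.eq_freeFlow hlt fun l => not_lt.1 (h l), fun h l => ?_⟩
  rw [h, not_lt]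
  exact div_le_div_of_nonneg_right (hφ.trans (r.cap_le hn l)) (r.v_pos l).le

end SelfishRouting
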